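/- For all δ ≥ 0 and A ≥ 0 there exists a constant C = C(δ, A) with the following property. Let Y be a proper geodesic δ-hyperbolic metric space, let ρ₀ be a ray in Y, let h be a horofunction at ρ₀ with constant A, and let P be a group of isometries of Y such that every φ ∈ P maps each ray asymptotic to ρ₀ to a ray asymptotic to ρ₀ and no element of P is hyperbolic. Then there exists a P-invariant subset B ⊆ Y with {h ≤ 0} ⊆ B ⊆ {h ≤ C}; in other words, the horoball {h ≤ 0} is uniformly close to a P-invariant one. -/

import Mathlib

section HyperbolicGeometry

variable {Y : Type*} [MetricSpace Y]

/-- `s` is a geodesic segment from `x` to `y`: the image of an isometric embedding of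
`[0, dist x y]` sending `0 ↦ x` and `dist x y ↦ y`. -/
def IsGeodesicSegment (s : Set Y) (x y : Y) : Prop :=
  ∃ c : ℝ → Y,
    (∀ t₁ ∈ Set.Icc (0 : ℝ) (dist x y), ∀ t₂ ∈ Set.Icc (0 : ℝ) (dist x y),
      dist (c t₁) (c t₂) = |t₁ - t₂|) ∧
    c 0 = x ∧ c (dist x y) = y ∧ s = c '' Set.Icc (0 : ℝ) (dist x y)

/-- A metric space is geodesic if any two points are connected by a geodesic segment. -/
def IsGeodesicSpace (Y : Type*) [MetricSpace Y] : Prop :=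
  ∀ x y : Y, ∃ s : Set Y, IsGeodesicSegment s x y

/-- `Y` is `δ`-hyperbolic: every geodesic triangle is `δ`-thin, i.e. each side is contained in
the `δ`-neighborhood of the union of the other two sides. -/
def IsDeltaHyperbolic (Y : Type*) [MetricSpace Y] (δ : ℝ) : Prop :=
  ∀ x y z : Y, ∀ sxy syz szx : Set Y,
    IsGeodesicSegment sxy x y → IsGeodesicSegment syz y z → IsGeodesicSegment szx z x →
      (∀ p ∈ sxy, ∃ q ∈ syz ∪ szx, dist p q ≤ δ) ∧
      (∀ p ∈ syz, ∃ q ∈ szx ∪ sxy, dist p q ≤ δ) ∧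
      (∀ p ∈ szx, ∃ q ∈ sxy ∪ syz, dist p q ≤ δ)

/-- A (geodesic) ray in `Y`, parameterized by `[0, ∞)`. -/
def IsRay (ρ : ℝ → Y) : Prop :=
  ∀ s t : ℝ, 0 ≤ s → 0 ≤ t → dist (ρ s) (ρ t) = |s - t|

/-- Two rays are asymptotic if their images are at finite Hausdorff distance. -/
def AsymptoticRays (ρ ρ' : ℝ → Y) : Prop :=
  ∃ D : ℝ, (∀ s : ℝ, 0 ≤ s → ∃ t : ℝ, 0 ≤ t ∧ dist (ρ s) (ρ' t) ≤ D) ∧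
    (∀ t : ℝ, 0 ≤ t → ∃ s : ℝ, 0 ≤ s ∧ dist (ρ s) (ρ' t) ≤ D)

/-- `h` is a horofunction at (the ideal point of) the ray `ρ₀` with constant `A`:
`h` is `1`-Lipschitz and decays with coarse slope `-1` along every ray asymptotic to `ρ₀`. -/
def IsHorofunction (ρ₀ : ℝ → Y) (A : ℝ) (h : Y → ℝ) : Prop :=
  LipschitzWith 1 h ∧
    ∀ ρ : ℝ → Y, IsRay ρ → AsymptoticRays ρ ρ₀ →
      ∀ t₁ t₂ : ℝ, 0 ≤ t₁ → 0 ≤ t₂ → |(h (ρ t₂) - h (ρ t₁)) - (t₁ - t₂)| ≤ A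

/-- An isometry `φ` of `Y` is hyperbolic if some (equivalently, every) orbit map
`ℤ → Y`, `n ↦ φⁿ y`, is a quasi-isometric embedding. -/
def IsHyperbolicIsometry (φ : Y ≃ᵢ Y) : Prop :=
  ∃ y : Y, ∃ L A : ℝ, 0 < L ∧ ∀ m n : ℤ,
    L⁻¹ * |(m : ℝ) - (n : ℝ)| - A ≤ dist ((φ ^ m) y) ((φ ^ n) y) ∧
    dist ((φ ^ m) y) ((φ ^ n) y) ≤ L * |(m : ℝ) - (n : ℝ)| + A

end HyperbolicGeometry

section Aux

variable {Y : Type*} [MetricSpace Y]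

lemma IsGeodesicSegment.symm' {s : Set Y} {x y : Y} (h : IsGeodesicSegment s x y) :
    IsGeodesicSegment s y x := by
  obtain ⟨c, hc, h0, h1, rfl⟩ := h
  refine ⟨fun t => c (dist x y - t), ?_, ?_, ?_, ?_⟩
  · intro a ha b hb
    rw [dist_comm y x] at ha hb
    rw [hc _ ⟨by linarith [ha.2], by linarith [ha.1]⟩ _ ⟨by linarith [hb.2], by linarith [hb.1]⟩,
      abs_sub_comm]
    congr 1; ring
  · simpa using h1
  · simpa [dist_comm y x] using h0
  · rw [dist_comm y x]
    ext p
    constructor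
    · rintro ⟨t, ht, rfl⟩
      exact ⟨dist x y - t, ⟨by linarith [ht.2], by linarith [ht.1]⟩, by simp⟩
    · rintro ⟨t, ht, rfl⟩
      exact ⟨dist x y - t, ⟨by linarith [ht.2], by linarith [ht.1]⟩, by simp⟩

lemma IsGeodesicSegment.dist_add {s : Set Y} {x y p : Y} (h : IsGeodesicSegment s x y)
    (hp : p ∈ s) : dist x p + dist p y = dist x y := by
  obtain ⟨c, hc, h0, h1, rfl⟩ := h
  obtain ⟨t, ht, rfl⟩ := hp
  have a := hc 0 ⟨le_rfl, dist_nonneg⟩ t ht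
  have b := hc t ht (dist x y) ⟨dist_nonneg, le_rfl⟩
  rw [h0] at a
  rw [h1] at b
  rw [a, b, abs_of_nonpos (by linarith [ht.1]), abs_of_nonpos (by linarith [ht.2])]
  ring

lemma IsRay.segment {ρ : ℝ → Y} (h : IsRay ρ) {T : ℝ} (hT : 0 ≤ T) :
    IsGeodesicSegment (ρ '' Set.Icc 0 T) (ρ 0) (ρ T) := by
  have hd : dist (ρ 0) (ρ T) = T := by
    rw [h 0 T le_rfl hT, zero_sub, abs_neg, abs_of_nonneg hT]
  refine ⟨ρ, ?_, rfl, by rw [hd], by rw [hd]⟩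
  intro a ha b hb
  exact h a b ha.1 hb.1

/-- A geodesic from `y` to a point on a ray fellow-travels the ray. -/
lemma fellow {δ : ℝ} (hg : IsGeodesicSpace Y) (hδ : IsDeltaHyperbolic Y δ) (h0 : 0 ≤ δ)
    {ρ : ℝ → Y} (hρ : IsRay ρ) (y : Y) {N s : ℝ} (hs : 0 ≤ s) (hsN : s ≤ N)
    (hsd : s ≤ dist y (ρ N)) {c : ℝ → Y}
    (hc : ∀ t₁ ∈ Set.Icc (0 : ℝ) (dist y (ρ N)), ∀ t₂ ∈ Set.Icc (0 : ℝ) (dist y (ρ N)),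
      dist (c t₁) (c t₂) = |t₁ - t₂|) (hc0 : c 0 = y) (hc1 : c (dist y (ρ N)) = ρ N) :
    dist (c s) (ρ s) ≤ 2 * δ + 3 * dist y (ρ 0) := by
  have hseg : IsGeodesicSegment (c '' Set.Icc (0 : ℝ) (dist y (ρ N))) y (ρ N) :=
    ⟨c, hc, hc0, hc1, rfl⟩
  obtain ⟨σ, hσ⟩ := hg y (ρ 0)
  have hys : ∀ t ∈ Set.Icc (0 : ℝ) (dist y (ρ N)), dist y (c t) = t := by
    intro t ht
    have := hc 0 ⟨le_rfl, dist_nonneg⟩ t ht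
    rw [hc0] at this
    rw [this, zero_sub, abs_neg, abs_of_nonneg ht.1]
  have hρs : dist (ρ 0) (ρ s) = s := by
    rw [hρ 0 s le_rfl hs, zero_sub, abs_neg, abs_of_nonneg hs]
  have hys' := hys s ⟨hs, hsd⟩
  have hd0 : 0 ≤ dist y (ρ 0) := dist_nonneg
  obtain ⟨q, hq, hpq⟩ := (hδ _ _ _ _ _ _ (hρ.segment (hs.trans hsN)) hseg.symm' hσ).1 (ρ s)
    ⟨s, ⟨hs, hsN⟩, rfl⟩
  rcases hq with ⟨t, ht, rfl⟩ | hq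
  · have h1 := hys t ht
    have h2 := hc s ⟨hs, hsd⟩ t ht
    have h3 : |s - t| ≤ δ + dist y (ρ 0) := by
      rw [abs_le]
      constructor
      · linarith [dist_triangle4 y (ρ 0) (ρ s) (c t)]
      · linarith [dist_triangle4 (ρ 0) y (c t) (ρ s), dist_comm (ρ 0) y, dist_comm (ρ s) (c t)]
    linarith [dist_triangle (c s) (c t) (ρ s), dist_comm (ρ s) (c t)]
  · have h1 := hσ.dist_add hq
    have h2 : s ≤ δ + dist y (ρ 0) := by
      have := @dist_nonneg _ _ y q
      linarith [dist_triangle (ρ 0) q (ρ s), dist_comm (ρ 0) q, dist_comm (ρ s) q]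
    linarith [dist_triangle4 (c s) y (ρ 0) (ρ s), dist_comm (c s) y]

open Filter Topology in
/-- In a proper hyperbolic space there is a ray from `y` asymptotic to a given ray. -/
lemma exists_ray [ProperSpace Y] {δ : ℝ} (hg : IsGeodesicSpace Y) (hδ : IsDeltaHyperbolic Y δ)
    (h0 : 0 ≤ δ) {ρ : ℝ → Y} (hρ : IsRay ρ) (y : Y) :
    ∃ r : ℝ → Y, IsRay r ∧ r 0 = y ∧
      ∀ s, 0 ≤ s → dist (r s) (ρ s) ≤ 2 * δ + 3 * dist y (ρ 0) := by
  choose S hS using hg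
  choose c hc hc0 hc1 _ using fun n : ℕ => hS y (ρ n)
  let U : Ultrafilter ℕ := hyperfilter ℕ
  have hU : (U : Filter ℕ) ≤ atTop := Nat.hyperfilter_le_atTop
  have hev : ∀ t : ℝ, ∀ᶠ n : ℕ in (U : Filter ℕ), t ≤ n ∧ t ≤ dist y (ρ n) := by
    intro t
    apply hU
    filter_upwards [eventually_ge_atTop ⌈|t| + dist y (ρ 0)⌉₊] with n hn
    have hn' : |t| + dist y (ρ 0) ≤ n := Nat.ceil_le.1 hn
    have hd0 : 0 ≤ dist y (ρ 0) := dist_nonneg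
    have h1 : dist (ρ 0) (ρ n) = n := by
      rw [hρ 0 n le_rfl (Nat.cast_nonneg n), zero_sub, abs_neg, abs_of_nonneg (Nat.cast_nonneg n)]
    have := le_abs_self t
    constructor
    · linarith
    · linarith [dist_triangle (ρ 0) y (ρ n), dist_comm y (ρ 0)]
  have hlim : ∀ t : ℝ, ∃ x : Y, 0 ≤ t → Tendsto (fun n => c n t) U (𝓝 x) := by
    intro t
    by_cases ht : 0 ≤ t
    · have hK : IsCompact (Metric.closedBall y t) := isCompact_closedBall y t
      obtain ⟨x, -, hx⟩ := hK.ultrafilter_le_nhds (U.map (fun n => c n t)) (by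
        rw [le_principal_iff]
        show ∀ᶠ n in (U : Filter ℕ), c n t ∈ Metric.closedBall y t
        filter_upwards [hev t] with n hn
        have := hc n t ⟨ht, hn.2⟩ 0 ⟨le_rfl, dist_nonneg⟩
        rw [hc0] at this
        rw [Metric.mem_closedBall, this, sub_zero, abs_of_nonneg ht])
      exact ⟨x, fun _ => hx⟩
    · exact ⟨y, fun h => absurd h ht⟩
  choose r hr using hlim
  refine ⟨r, ?_, ?_, ?_⟩
  · intro s t hs ht
    refine tendsto_nhds_unique ((hr s hs).dist (hr t ht)) ?_
    refine tendsto_const_nhds.congr' ?_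
    filter_upwards [hev s, hev t] with n h1 h2
    exact (hc n s ⟨hs, h1.2⟩ t ⟨ht, h2.2⟩).symm
  · refine tendsto_nhds_unique (hr 0 le_rfl) ?_
    simp only [hc0]
    exact tendsto_const_nhds
  · intro s hs
    refine le_of_tendsto ((hr s hs).dist tendsto_const_nhds) ?_
    filter_upwards [hev s] with n hn
    exact fellow (fun a b => ⟨_, hS a b⟩) hδ h0 hρ y hs hn.1 hn.2 (hc n) (hc0 n) (hc1 n)

/-- Asymptotic rays come `2δ`-close. -/
lemma exists_close {δ : ℝ} (hg : IsGeodesicSpace Y) (hδ : IsDeltaHyperbolic Y δ)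
    (h0 : 0 ≤ δ) {ρ r : ℝ → Y} (hρ : IsRay ρ) (hr : IsRay r) {M : ℝ}
    (hM : ∀ s, 0 ≤ s → dist (r s) (ρ s) ≤ M) :
    ∃ s t : ℝ, 0 ≤ s ∧ 0 ≤ t ∧ dist (r s) (ρ t) ≤ 2 * δ := by
  have hM0 : 0 ≤ M := dist_nonneg.trans (hM 0 le_rfl)
  have hd0 : 0 ≤ dist (r 0) (ρ 0) := dist_nonneg
  obtain ⟨s, hsdef⟩ : ∃ s, s = dist (r 0) (ρ 0) + 2 * δ + 1 := ⟨_, rfl⟩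
  obtain ⟨T, hTdef⟩ : ∃ T, T = s + M + δ + 1 := ⟨_, rfl⟩
  have hs : 0 ≤ s := by linarith
  have hT : 0 ≤ T := by linarith
  have hsT : s ≤ T := by linarith
  obtain ⟨σ₀, hσ₀⟩ := hg (ρ 0) (r 0)
  obtain ⟨σ₁, hσ₁⟩ := hg (r T) (ρ T)
  obtain ⟨D, hD⟩ := hg (ρ T) (r 0)
  have e1 : dist (r 0) (r s) = s := by
    rw [hr 0 s le_rfl hs, zero_sub, abs_neg, abs_of_nonneg hs]
  have e2 : dist (r s) (r T) = T - s := by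
    rw [hr s T hs hT, abs_sub_comm, abs_of_nonneg (by linarith)]
  obtain ⟨q, hq, hpq⟩ := (hδ _ _ _ _ _ _ (hr.segment hT) hσ₁ hD).1 (r s) ⟨s, ⟨hs, hsT⟩, rfl⟩
  rcases hq with hq | hq
  · exfalso
    have h1 := hσ₁.dist_add hq
    have h2 := @dist_nonneg _ _ q (ρ T)
    linarith [dist_triangle (r s) q (r T), dist_comm q (r T), hM T hT]
  · obtain ⟨p, hp, hqp⟩ := (hδ _ _ _ _ _ _ (hρ.segment hT) hD hσ₀.symm').2.1 q hq
    rcases hp with hp | ⟨t, ht, rfl⟩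
    · exfalso
      have h1 := hσ₀.dist_add hp
      have h2 := @dist_nonneg _ _ (ρ 0) p
      linarith [dist_triangle4 (r s) q p (r 0), dist_comm (r s) (r 0), dist_comm (ρ 0) (r 0)]
    · exact ⟨s, t, hs, ht.1, by linarith [dist_triangle (r s) q (ρ t)]⟩

/-- Horofunctions at the same point agree coarsely, up to a constant. -/
lemma exists_busemann [ProperSpace Y] {δ A : ℝ} (hg : IsGeodesicSpace Y)
    (hδ : IsDeltaHyperbolic Y δ) (h0 : 0 ≤ δ) {ρ : ℝ → Y} (hρ : IsRay ρ) (y : Y) :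
    ∃ b : ℝ, ∀ h : Y → ℝ, IsHorofunction ρ A h →
      |h y - h (ρ 0) - b| ≤ 2 * A + 2 * δ := by
  obtain ⟨r, hr, hr0, hM⟩ := exists_ray hg hδ h0 hρ y
  obtain ⟨s, t, hs, ht, hst⟩ := exists_close hg hδ h0 hρ hr hM
  refine ⟨s - t, fun h hh => ?_⟩
  have a1 := hh.2 r hr ⟨_, fun s hs => ⟨s, hs, hM s hs⟩, fun s hs => ⟨s, hs, hM s hs⟩⟩ 0 s le_rfl hs
  have a2 := hh.2 ρ hρ ⟨0, fun s hs => ⟨s, hs, by simp⟩, fun s hs => ⟨s, hs, by simp⟩⟩ 0 t le_rfl ht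
  have a3 := hh.1.dist_le_mul (r s) (ρ t)
  rw [Real.dist_eq, NNReal.coe_one, one_mul] at a3
  rw [hr0] at a1
  rw [abs_le] at *
  constructor <;> linarith [a1.1, a1.2, a2.1, a2.2, a3.1, a3.2]

/-- An isometry that increases a 1-Lipschitz function by a definite amount is hyperbolic. -/
lemma hyperbolic_of_translate {h : Y → ℝ} (hh : LipschitzWith 1 h) (φ : Y ≃ᵢ Y) (y : Y)
    (hφ : ∀ z, h z + 1 ≤ h (φ z)) : IsHyperbolicIsometry φ := by
  have lower : ∀ (n : ℕ) (z : Y), h z + n ≤ h ((φ ^ n) z) := by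
    intro n
    induction n with
    | zero => intro z; simp
    | succ k ih =>
      intro z
      rw [pow_succ', IsometryEquiv.mul_apply]
      push_cast
      linarith [ih z, hφ ((φ ^ k) z)]
  have upper : ∀ n : ℕ, dist y ((φ ^ n) y) ≤ n * dist y (φ y) := by
    intro n
    induction n with
    | zero => simp
    | succ k ih =>
      rw [pow_succ', IsometryEquiv.mul_apply]
      push_cast
      linarith [dist_triangle y (φ y) (φ ((φ ^ k) y)), φ.dist_eq y ((φ ^ k) y)]
  have hd0 : 0 ≤ dist y (φ y) := dist_nonneg
  have main : ∀ (m : ℤ) (k : ℕ), (k : ℝ) ≤ dist ((φ ^ m) y) ((φ ^ (m + k)) y) ∧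
      dist ((φ ^ m) y) ((φ ^ (m + k)) y) ≤ (1 + dist y (φ y)) * k := by
    intro m k
    constructor
    · have h1 : (φ ^ (m + (k : ℤ))) y = (φ ^ k) ((φ ^ m) y) := by
        rw [add_comm, zpow_add, zpow_natCast, IsometryEquiv.mul_apply]
      rw [h1]
      have h2 := lower k ((φ ^ m) y)
      have h3 := hh.dist_le_mul ((φ ^ m) y) ((φ ^ k) ((φ ^ m) y))
      rw [Real.dist_eq, NNReal.coe_one, one_mul] at h3
      linarith [(abs_le.1 h3).1]
    · rw [zpow_add, zpow_natCast, IsometryEquiv.mul_apply, IsometryEquiv.dist_eq]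
      have : (0 : ℝ) ≤ k := Nat.cast_nonneg k
      linarith [upper k]
  have hL : (1 + dist y (φ y))⁻¹ ≤ 1 := inv_le_one_of_one_le₀ (by linarith)
  refine ⟨y, 1 + dist y (φ y), 0, by linarith, ?_⟩
  have gen : ∀ m n : ℤ, m ≤ n →
      (1 + dist y (φ y))⁻¹ * |(m : ℝ) - (n : ℝ)| - 0 ≤ dist ((φ ^ m) y) ((φ ^ n) y) ∧
      dist ((φ ^ m) y) ((φ ^ n) y) ≤ (1 + dist y (φ y)) * |(m : ℝ) - (n : ℝ)| + 0 := by
    intro m n hmn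
    obtain ⟨k, rfl⟩ := Int.le.dest hmn
    have e : |(m : ℝ) - ((m + (k : ℤ) : ℤ) : ℝ)| = k := by
      push_cast
      rw [sub_add_cancel_left, abs_neg, abs_of_nonneg (Nat.cast_nonneg k)]
    rw [e]
    have hk : (0 : ℝ) ≤ k := Nat.cast_nonneg k
    have := main m k
    constructor
    · linarith [mul_le_mul_of_nonneg_right hL hk, this.1]
    · linarith [this.2]
  intro m n
  rcases le_total m n with hmn | hmn
  · exact gen m n hmn
  · rw [dist_comm ((φ ^ m) y), abs_sub_comm]
    exact gen n m hmn

end Aux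

/-- For all `δ ≥ 0` and `A ≥ 0` there is `C = C(δ, A)`: if `Y` is a proper geodesic
`δ`-hyperbolic space, `h` a horofunction at a ray `ρ₀` with constant `A`, and `P` a group of
isometries of `Y` fixing the ideal point of `ρ₀` (every element maps rays asymptotic to `ρ₀`
to rays asymptotic to `ρ₀`) and containing no hyperbolic element, then there is a
`P`-invariant set `B` with `{h ≤ 0} ⊆ B ⊆ {h ≤ C}`. -/
theorem exists_invariant_horoball :
    ∀ δ A : ℝ, 0 ≤ δ → 0 ≤ A → ∃ C : ℝ,
      ∀ (Y : Type*) [MetricSpace Y], ∀ (_ : ProperSpace Y),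
        IsGeodesicSpace Y → IsDeltaHyperbolic Y δ →
        ∀ ρ₀ : ℝ → Y, IsRay ρ₀ →
        ∀ h : Y → ℝ, IsHorofunction ρ₀ A h →
        ∀ P : Subgroup (Y ≃ᵢ Y),
          (∀ φ ∈ P, ∀ ρ : ℝ → Y, IsRay ρ → AsymptoticRays ρ ρ₀ →
            AsymptoticRays (fun t => φ (ρ t)) ρ₀) →
          (∀ φ ∈ P, ¬ IsHyperbolicIsometry φ) →
          ∃ B : Set Y, (∀ φ ∈ P, (fun y => φ y) '' B = B) ∧
            {y : Y | h y ≤ 0} ⊆ B ∧ B ⊆ {y : Y | h y ≤ C} := by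
  intro δ A hδ0 hA0
  refine ⟨8 * A + 8 * δ + 1, ?_⟩
  intro Y _ _ hg hδ ρ₀ hρ₀ h hh P hP hnh
  have key : ∀ φ ∈ P, ∀ y, h (φ y) ≤ h y + (8 * A + 8 * δ + 1) := by
    intro φ hφ y
    by_contra hlt
    rw [not_le] at hlt
    have hh' : IsHorofunction ρ₀ A (fun z => h (φ z)) := by
      refine ⟨by simpa [Function.comp_def] using hh.1.comp φ.isometry.lipschitz, ?_⟩
      intro ρ hρ hρa t₁ t₂ ht₁ ht₂
      refine hh.2 (fun t => φ (ρ t)) ?_ (hP φ hφ ρ hρ hρa) t₁ t₂ ht₁ ht₂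
      intro s t hs ht
      rw [φ.dist_eq]
      exact hρ s t hs ht
    have dev : ∀ z, |(h (φ z) - h z) - (h (φ (ρ₀ 0)) - h (ρ₀ 0))| ≤ 4 * A + 4 * δ := by
      intro z
      obtain ⟨b, hb⟩ := exists_busemann (A := A) hg hδ hδ0 hρ₀ z
      have h1 := abs_le.1 (hb h hh)
      have h2 := abs_le.1 (hb _ hh')
      rw [abs_le]
      constructor <;> linarith [h1.1, h1.2, h2.1, h2.2]
    refine hnh φ hφ (hyperbolic_of_translate hh.1 φ y fun z => ?_)
    have h1 := abs_le.1 (dev y)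
    have h2 := abs_le.1 (dev z)
    linarith [h1.1, h1.2, h2.1, h2.2]
  refine ⟨{z | ∃ φ ∈ P, ∃ y, h y ≤ 0 ∧ φ y = z}, ?_, ?_, ?_⟩
  · intro φ hφ
    ext z
    constructor
    · rintro ⟨_, ⟨ψ, hψ, y, hy, rfl⟩, rfl⟩
      exact ⟨φ * ψ, P.mul_mem hφ hψ, y, hy, rfl⟩
    · rintro ⟨ψ, hψ, y, hy, rfl⟩
      refine ⟨φ⁻¹ (ψ y), ⟨φ⁻¹ * ψ, P.mul_mem (P.inv_mem hφ) hψ, y, hy, rfl⟩, ?_⟩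
      exact φ.apply_symm_apply (ψ y)
  · intro y hy
    exact ⟨1, P.one_mem, y, hy, rfl⟩
  · rintro _ ⟨φ, hφ, y, hy, rfl⟩
    show h (φ y) ≤ _
    linarith [key φ hφ y]
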